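/- Let X be a set, Y a Banach space, Φ : X → Y, and suppose the image Φ(X) is contained in a compact subset of Y and Φ(X) ⊆ C where C ⊆ Y is a nonempty closed bounded convex set with Φ : C → C continuous. Then Φ has a fixed point in C. (Schauder fixed point theorem in the form used: a continuous self-map of a nonempty closed convex subset of a Banach space with precompact image has a fixed point.) -/

import Mathlib

namespace Scarf
open Finset

/-- `S` is dominant. -/
def Dom {V I α : Type*} [LinearOrder α] (k : I → V → α) (S : Finset V) : Prop :=
  ∀ y, ∃ i, ∀ x ∈ S, k i y ≤ k i x

section
set_option linter.unusedSectionVars false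
variable {V I α : Type*} [Fintype V] [DecidableEq V] [Fintype I] [DecidableEq I] [LinearOrder α]

lemma Dom.mono {k : I → V → α} {S R : Finset V} (h : Dom k R) (hS : S ⊆ R) : Dom k S := by
  intro y
  obtain ⟨i, hi⟩ := h y
  exact ⟨i, fun x hx => hi x (hS hx)⟩

open Classical in
lemma door (k : I → V → α) (hk : ∀ i, Function.Injective (k i)) (S : Finset V) (hS : Dom k S)
    (hc : S.card + 1 = Fintype.card I) (hne : S.Nonempty)
    (hM : ∀ i, ∃ y, ∀ l, l ≠ i → ∃ x ∈ S, k l x < k l y) :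
    (univ.filter (fun x => x ∉ S ∧ Dom k (insert x S))).card = 2 := by
  have hm : ∀ i, ∃ m ∈ S, ∀ x ∈ S, k i m ≤ k i x := fun i => exists_min_image S (k i) hne
  choose m hmS hm using hm
  have hsurj : ∀ y ∈ S, ∃ i, m i = y := by
    intro y hy
    obtain ⟨i, hi⟩ := hS y
    exact ⟨i, hk i (le_antisymm (hm i y hy) (hi _ (hmS i)))⟩
  obtain ⟨i, j, hij, hmij⟩ : ∃ i j, i ≠ j ∧ m i = m j := by
    by_contra! h
    have hinj : Function.Injective m := by
      intro a b hab
      by_contra hne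
      exact h a b hne hab
    have := Finset.card_le_card_of_injOn (s := (univ : Finset I)) (t := S) m (by simp [Set.MapsTo, hmS])
      hinj.injOn
    rw [card_univ] at this
    omega
  -- maximal elements
  have hx : ∀ p, ∃ x, (∀ l, l ≠ p → k l (m l) < k l x) ∧
      ∀ y, (∀ l, l ≠ p → k l (m l) < k l y) → k p y ≤ k p x := by
    intro p
    obtain ⟨y, hy⟩ := hM p
    obtain ⟨x, hx, hx'⟩ := exists_max_image
      (univ.filter (fun y => ∀ l, l ≠ p → k l (m l) < k l y)) (k p) ⟨y, by
        simp only [mem_filter, mem_univ, true_and]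
        intro l hl
        obtain ⟨z, hz, hzy⟩ := hy l hl
        exact (hm l z hz).trans_lt hzy⟩
    simp only [mem_filter, mem_univ, true_and] at hx hx'
    exact ⟨x, hx, hx'⟩
  choose X hX1 hX2 using hx
  have hnall : ∀ x, ¬ ∀ l, k l (m l) < k l x := by
    intro x h
    obtain ⟨l, hl⟩ := hS x
    exact absurd (hl _ (hmS l)) (not_le.2 (h l))
  have hmem : ∀ p q, p ≠ q → m p = m q → X p ∉ S ∧ Dom k (insert (X p) S) := by
    intro p q hpq hmpq
    constructor
    · intro h
      obtain ⟨l, hl⟩ := hsurj _ h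
      by_cases hlp : l = p
      · have := hX1 p q hpq.symm
        rw [← hl, hlp, hmpq] at this
        exact lt_irrefl _ this
      · have := hX1 p l hlp
        rw [← hl] at this
        exact lt_irrefl _ this
    · intro y
      have hXp : k p (X p) < k p (m p) ∨ k p (X p) = k p (m p) := by
        rcases lt_trichotomy (k p (X p)) (k p (m p)) with h | h | h
        · exact Or.inl h
        · exact Or.inr h
        · exact absurd (fun l => if e : l = p then e ▸ h else hX1 p l e) (hnall (X p))
      have hXp' : k p (X p) ≤ k p (m p) := hXp.elim le_of_lt le_of_eq
      by_cases hy : ∀ l, l ≠ p → k l (m l) < k l y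
      · refine ⟨p, fun x hx => ?_⟩
        have h1 := hX2 p y hy
        rcases mem_insert.1 hx with rfl | hx
        · exact h1
        · exact h1.trans (hXp'.trans (hm p x hx))
      · push Not at hy
        obtain ⟨l, hl, hyl⟩ := hy
        refine ⟨l, fun x hx => ?_⟩
        rcases mem_insert.1 hx with rfl | hx
        · exact hyl.trans (hX1 p l hl).le
        · exact hyl.trans (hm l x hx)
  have hXne : X i ≠ X j := by
    intro h
    refine hnall (X i) fun l => ?_
    by_cases hl : l = i
    · subst hl
      rw [h]
      exact hX1 j l hij
    · exact hX1 i l hl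
  have : univ.filter (fun x => x ∉ S ∧ Dom k (insert x S)) = {X i, X j} := by
    ext x
    simp only [mem_filter, mem_univ, true_and, mem_insert, mem_singleton]
    constructor
    · rintro ⟨hxS, hxD⟩
      have hneq : ∀ l, k l x ≠ k l (m l) := fun l h => hxS (hk l h ▸ hmS l)
      let m' : I → V := fun l => if k l x < k l (m l) then x else m l
      have hm'mem : ∀ l, m' l ∈ insert x S := by
        intro l
        by_cases h : k l x < k l (m l) <;> simp [m', h, hmS]
      have hm'min : ∀ l, ∀ y ∈ insert x S, k l (m' l) ≤ k l y := by
        intro l y hy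
        by_cases h : k l x < k l (m l)
        · simp only [m', h, if_true]
          rcases mem_insert.1 hy with rfl | hy
          · exact le_rfl
          · exact h.le.trans (hm l y hy)
        · simp only [m', h, if_false]
          rcases mem_insert.1 hy with rfl | hy
          · exact not_lt.1 h
          · exact hm l y hy
      have himg : univ.image m' = insert x S := by
        ext y
        simp only [mem_image, mem_univ, true_and]
        constructor
        · rintro ⟨l, rfl⟩
          exact hm'mem l
        · intro hy
          obtain ⟨l, hl⟩ := hxD y
          exact ⟨l, hk l (le_antisymm (hm'min l y hy) (hl _ (hm'mem l)))⟩
      have hinj : Function.Injective m' := by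
        have : (univ.image m').card = (univ : Finset I).card := by
          rw [himg, card_insert_of_notMem hxS, hc, card_univ]
        have := card_image_iff.1 this
        simpa using this
      obtain ⟨p, hp⟩ : ∃ p, k p x < k p (m p) := by
        have := hnall x
        push Not at this
        obtain ⟨p, hp⟩ := this
        exact ⟨p, lt_of_le_of_ne hp (hneq p)⟩
      have hpo : ∀ l, l ≠ p → k l (m l) < k l x := by
        intro l hl
        by_contra h
        have h' : k l x < k l (m l) := lt_of_le_of_ne (not_lt.1 h) (hneq l)
        exact hl (hinj (by simp [m', h', hp]))
      have hpij : p = i ∨ p = j := by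
        by_contra! h
        have h1 := hpo i h.1.symm
        have h2 := hpo j h.2.symm
        exact hij (hinj (by simp only [m', h1.not_gt, h2.not_gt, if_false]; exact hmij))
      have hxX : x = X p := by
        refine hk p (le_antisymm (hX2 p x hpo) ?_)
        obtain ⟨l, hl⟩ := hxD (X p)
        by_cases hlp : l = p
        · subst hlp
          exact hl x (mem_insert_self _ _)
        · exact absurd (hl (m l) (mem_insert_of_mem (hmS l))) (not_le.2 (hX1 p l hlp))
      rcases hpij with rfl | rfl
      · exact Or.inl hxX
      · exact Or.inr hxX
    · rintro (rfl | rfl)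
      · exact hmem i j hij hmij
      · exact hmem j i hij.symm hmij.symm
  rw [this, card_pair hXne]

open Classical in
lemma room (c : V → I) (i0 : I) (R : Finset V) (hR : R.card = Fintype.card I)
    (hc : R.image c ≠ univ) :
    Even (R.filter (fun x => (R.erase x).image c = univ.erase i0)).card := by
  rcases (R.filter (fun x => (R.erase x).image c = univ.erase i0)).eq_empty_or_nonempty with h | h
  · rw [h]; simp
  obtain ⟨x0, hx0⟩ := h
  obtain ⟨hx0R, hx0⟩ := mem_filter.1 hx0
  have hinj : ∀ x ∈ R, (R.erase x).image c = univ.erase i0 → Set.InjOn c (R.erase x : Finset V) := by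
    intro x hx h
    apply card_image_iff.1
    rw [h, card_erase_of_mem (mem_univ _), card_erase_of_mem hx, hR, card_univ]
  have hcx0 : c x0 ≠ i0 := by
    intro h
    apply hc
    rw [← insert_erase hx0R, image_insert, hx0, h, insert_erase (mem_univ _)]
  obtain ⟨x1, hx1, hcx1⟩ : ∃ x1 ∈ R.erase x0, c x1 = c x0 := by
    have : c x0 ∈ (R.erase x0).image c := by rw [hx0]; simp [hcx0]
    simpa using this
  have hne : x1 ≠ x0 := (mem_erase.1 hx1).1
  have hx1R : x1 ∈ R := (mem_erase.1 hx1).2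
  have : R.filter (fun x => (R.erase x).image c = univ.erase i0) = {x0, x1} := by
    ext x
    simp only [mem_filter, mem_insert, mem_singleton]
    constructor
    · rintro ⟨hxR, hx⟩
      by_contra! h
      have := hinj x hxR hx (by simp [hx0R, h.1.symm]) (by simp [hx1R, h.2.symm]) hcx1.symm
      exact hne this.symm
    · rintro (rfl | rfl)
      · exact ⟨hx0R, hx0⟩
      · refine ⟨hx1R, ?_⟩
        rw [← hx0]
        ext a
        simp only [mem_image, mem_erase]
        constructor
        · rintro ⟨y, ⟨hy1, hy2⟩, rfl⟩
          by_cases h : y = x0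
          · exact ⟨x, ⟨hne, hx1R⟩, by rw [hcx1, h]⟩
          · exact ⟨y, ⟨h, hy2⟩, rfl⟩
        · rintro ⟨y, ⟨hy1, hy2⟩, rfl⟩
          by_cases h : y = x
          · exact ⟨x0, ⟨hne.symm, hx0R⟩, by rw [h, hcx1]⟩
          · exact ⟨y, ⟨h, hy2⟩, rfl⟩
  rw [this, card_pair hne.symm]
  exact even_two

open Classical in
theorem scarf (k : I → V → α) (hk : ∀ i, Function.Injective (k i)) (s : I → V) (c : V → I)
    (hcs : ∀ i, c (s i) = i) (hs1 : ∀ i v, k i (s i) ≤ k i v)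
    (hs2 : ∀ t, t ∉ Set.range s → ∀ i j, j ≠ i → k j t < k j (s i))
    (t0 : V) (ht0 : t0 ∉ Set.range s) (i0 : I) :
    ∃ R : Finset V, Dom k R ∧ R.image c = univ := by
  by_contra! hno
  let D : Finset (Finset V) := univ.filter
    (fun S => Dom k S ∧ S.image c = univ.erase i0 ∧ S.card + 1 = Fintype.card I)
  let Rm : Finset (Finset V) := univ.filter (fun R => Dom k R ∧ R.card = Fintype.card I)
  have hcardI : 1 ≤ Fintype.card I := Fintype.card_pos_iff.2 ⟨i0⟩
  -- double count
  have hdc : ∑ S ∈ D, (univ.filter (fun x => x ∉ S ∧ Dom k (insert x S))).card =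
      ∑ R ∈ Rm, (R.filter (fun x => (R.erase x).image c = univ.erase i0)).card := by
    rw [← card_sigma, ← card_sigma]
    refine card_bij' (fun p _ => ⟨insert p.2 p.1, p.2⟩) (fun p _ => ⟨p.1.erase p.2, p.2⟩) ?_ ?_ ?_ ?_
    · rintro ⟨S, x⟩ h
      simp only [mem_sigma, mem_filter, mem_univ, true_and, D, Rm] at h ⊢
      obtain ⟨⟨h1, h2, h3⟩, h4, h5⟩ := h
      refine ⟨⟨h5, by rw [card_insert_of_notMem h4, h3]⟩, mem_insert_self _ _, ?_⟩
      rw [erase_insert h4, h2]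
    · rintro ⟨R, x⟩ h
      simp only [mem_sigma, mem_filter, mem_univ, true_and, D, Rm] at h ⊢
      obtain ⟨⟨h1, h2⟩, h3, h4⟩ := h
      refine ⟨⟨h1.mono (erase_subset _ _), h4, ?_⟩, notMem_erase _ _, ?_⟩
      · rw [card_erase_of_mem h3, h2]; omega
      · rw [insert_erase h3]; exact h1
    · rintro ⟨S, x⟩ h
      simp only [mem_sigma, mem_filter, mem_univ, true_and] at h
      simp [erase_insert h.2.1]
    · rintro ⟨R, x⟩ h
      simp only [mem_sigma, mem_filter] at h
      simp [insert_erase h.2.1]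
  have hright : Even (∑ R ∈ Rm, (R.filter (fun x => (R.erase x).image c = univ.erase i0)).card) := by
    apply Finset.even_sum
    intro R hR
    simp only [mem_filter, mem_univ, true_and, Rm] at hR
    exact room c i0 R hR.2 (hno R hR.1)
  have hsinj : Function.Injective s := fun a b h => by rw [← hcs a, ← hcs b, h]
  let S0 : Finset V := (univ.erase i0).image s
  have hS0 : ∀ v, v ∈ S0 ↔ ∃ j, j ≠ i0 ∧ s j = v := by intro v; simp [S0]
  have hS0D : S0 ∈ D := by
    simp only [mem_filter, mem_univ, true_and, D]
    refine ⟨?_, ?_, ?_⟩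
    · intro y
      by_cases hy : y ∈ Set.range s
      · obtain ⟨j, rfl⟩ := hy
        exact ⟨j, fun x _ => hs1 j x⟩
      · refine ⟨i0, fun x hx => ?_⟩
        obtain ⟨j, hj, rfl⟩ := (hS0 x).1 hx
        exact (hs2 y hy j i0 hj.symm).le
    · simp only [S0, image_image]
      have : c ∘ s = id := funext hcs
      rw [this, image_id]
    · rw [card_image_of_injective _ hsinj, card_erase_of_mem (mem_univ _), card_univ]; omega
  have hS0c : (univ.filter (fun x => x ∉ S0 ∧ Dom k (insert x S0))).card = 1 := by
    obtain ⟨x, hx, hxm⟩ := exists_max_image (univ.filter (fun t => t ∉ Set.range s)) (k i0)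
      ⟨t0, by simpa using ht0⟩
    have hx : x ∉ Set.range s := (mem_filter.1 hx).2
    have hxm : ∀ y, y ∉ Set.range s → k i0 y ≤ k i0 x := fun y hy =>
      hxm y (mem_filter.2 ⟨mem_univ _, hy⟩)
    rw [card_eq_one]
    refine ⟨x, ?_⟩
    ext y
    simp only [mem_filter, mem_univ, true_and, mem_singleton]
    constructor
    · rintro ⟨hy, hD⟩
      have hyr : y ∉ Set.range s := by
        rintro ⟨j, rfl⟩
        have hj : j = i0 := by
          by_contra h
          exact hy ((hS0 _).2 ⟨j, h, rfl⟩)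
        obtain ⟨i, hi⟩ := hD t0
        have hmem : s i ∈ insert (s j) S0 := by
          by_cases h : i = i0
          · rw [h, hj]; exact mem_insert_self _ _
          · exact mem_insert_of_mem ((hS0 _).2 ⟨i, h, rfl⟩)
        exact ht0 ⟨i, hk i (le_antisymm (hs1 i t0) (hi _ hmem))⟩
      obtain ⟨i, hi⟩ := hD x
      by_cases h : i = i0
      · subst h
        exact hk i (le_antisymm (hxm y hyr) (hi y (mem_insert_self _ _)))
      · exact absurd ⟨i, hk i (le_antisymm (hs1 i x)
          (hi _ (mem_insert_of_mem ((hS0 _).2 ⟨i, h, rfl⟩))))⟩ hx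
    · rintro rfl
      refine ⟨fun h => ?_, fun z => ?_⟩
      · obtain ⟨j, _, hj⟩ := (hS0 _).1 h
        exact hx ⟨j, hj⟩
      · by_cases hz : z ∈ Set.range s
        · obtain ⟨j, rfl⟩ := hz
          exact ⟨j, fun x _ => hs1 j x⟩
        · refine ⟨i0, fun v hv => ?_⟩
          rcases mem_insert.1 hv with rfl | hv
          · exact hxm z hz
          · obtain ⟨j, hj, rfl⟩ := (hS0 v).1 hv
            exact (hs2 z hz j i0 hj.symm).le
  have hleft : Even (∑ S ∈ D.erase S0, (univ.filter (fun x => x ∉ S ∧ Dom k (insert x S))).card) := by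
    apply Finset.even_sum
    intro S hS
    obtain ⟨hSne, hSD⟩ := mem_erase.1 hS
    simp only [mem_filter, mem_univ, true_and, D] at hSD
    obtain ⟨h1, h2, h3⟩ := hSD
    obtain ⟨t, htS, ht⟩ : ∃ t ∈ S, t ∉ Set.range s := by
      by_contra! h
      apply hSne
      ext v
      rw [hS0]
      constructor
      · intro hv
        obtain ⟨j, rfl⟩ := h v hv
        refine ⟨j, ?_, rfl⟩
        have : c (s j) ∈ S.image c := mem_image_of_mem c hv
        rw [h2, hcs] at this
        exact (mem_erase.1 this).1
      · rintro ⟨j, hj, rfl⟩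
        have : j ∈ S.image c := by rw [h2]; simp [hj]
        obtain ⟨v, hv, hvj⟩ := mem_image.1 this
        obtain ⟨l, rfl⟩ := h v hv
        rw [hcs] at hvj
        rwa [← hvj]
    rw [door k hk S h1 h3 ⟨t, htS⟩ (fun i => ⟨s i, fun l hl => ⟨t, htS, hs2 t ht i l hl⟩⟩)]
    exact even_two
  rw [← hdc, ← add_sum_erase D _ hS0D, hS0c] at hright
  have := hleft.add_one
  rw [add_comm] at this
  exact (Nat.not_even_iff_odd.2 this) hright
end
end Scarf

namespace Scarf
open Finset

open Classical in
theorem grid {I : Type*} [Fintype I] (i0 : I) (N : ℕ) (c0 : (I → ℤ) → I) :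
    ∃ t : I → ℤ, (∀ i, 0 ≤ t i) ∧ ∑ i, t i = N ∧ ∀ i, t i ≤ Fintype.card I ∨
      ∃ t' : I → ℤ, (∀ i, 0 ≤ t' i) ∧ ∑ i, t' i = N ∧ c0 t' = i ∧
        ∀ j, |t j - t' j| ≤ Fintype.card I := by
  let T : Finset (I → ℤ) := (Fintype.piFinset (fun _ => Icc (0 : ℤ) N)).filter
    (fun t => ∑ i, t i = N)
  have hT : ∀ t, t ∈ T ↔ (∀ i, 0 ≤ t i) ∧ ∑ i, t i = N := by
    intro t
    simp only [T, mem_filter, Fintype.mem_piFinset, mem_Icc]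
    constructor
    · rintro ⟨h1, h2⟩
      exact ⟨fun i => (h1 i).1, h2⟩
    · rintro ⟨h1, h2⟩
      refine ⟨fun i => ⟨h1 i, ?_⟩, h2⟩
      rw [← h2]
      exact single_le_sum (fun j _ => h1 j) (mem_univ i)
  have hTle : ∀ t ∈ T, ∀ i, t i ≤ N := by
    intro t ht i
    rw [← ((hT t).1 ht).2]
    exact single_le_sum (fun j _ => ((hT t).1 ht).1 j) (mem_univ i)
  let val : (T ⊕ I) → I → ℤ := Sum.elim (fun t => t.1) (fun i j => if j = i then -1 else N + 1)
  let e := Fintype.equivFin (T ⊕ I)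
  let k : I → (T ⊕ I) → ℤ ×ₗ Fin (Fintype.card (T ⊕ I)) := fun i v => toLex (val v i, e v)
  have hklt : ∀ i v w, val v i < val w i → k i v < k i w := by
    intro i v w h
    exact Prod.Lex.toLex_lt_toLex.2 (Or.inl h)
  have hkle : ∀ i v w, k i v ≤ k i w → val v i ≤ val w i := by
    intro i v w h
    by_contra h'
    exact absurd (hklt i w v (not_le.1 h')) (not_lt.2 h)
  have hk : ∀ i, Function.Injective (k i) := by
    intro i v w h
    have h1 : (val v i, e v) = (val w i, e w) := toLex.injective h
    exact e.injective (Prod.mk.inj h1).2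
  have ht0 : (fun i => if i = i0 then (N : ℤ) else 0) ∈ T := by
    rw [hT]
    refine ⟨fun i => ?_, by simp⟩
    split_ifs <;> simp
  obtain ⟨R, hD, hR⟩ := scarf k hk (Sum.inr : I → T ⊕ I) (Sum.elim (fun t => c0 t.1) id)
    (fun i => rfl)
    (by
      rintro i (t | j)
      · refine (hklt _ _ _ ?_).le
        have := ((hT t.1).1 t.2).1 i
        simp only [val, Sum.elim_inl, Sum.elim_inr, if_true]
        omega
      · by_cases h : j = i
        · rw [h]
        · refine (hklt _ _ _ ?_).le
          simp only [val, Sum.elim_inr, if_true, if_neg (Ne.symm h)]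
          omega)
    (by
      rintro (t | j) ht i j' hj
      · refine hklt _ _ _ ?_
        have := hTle t.1 t.2 j'
        simp only [val, Sum.elim_inl, Sum.elim_inr, if_neg hj]
        omega
      · exact absurd ⟨j, rfl⟩ ht)
    (Sum.inl ⟨_, ht0⟩) (by simp) i0
  have hnot : ¬ ∀ i, (Sum.inr i : T ⊕ I) ∈ R := by
    intro h
    obtain ⟨i, hi⟩ := hD (Sum.inl ⟨_, ht0⟩)
    have h1 := hkle _ _ _ (hi _ (h i))
    have h2 := ((hT _).1 ht0).1 i
    simp only [val, Sum.elim_inl, Sum.elim_inr, if_true] at h1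
    omega
  have hcol : ∀ i, (Sum.inr i : T ⊕ I) ∉ R → ∃ t : T, Sum.inl t ∈ R ∧ c0 t.1 = i := by
    intro i hi
    have : i ∈ R.image (Sum.elim (fun t : T => c0 t.1) id) := by rw [hR]; exact mem_univ _
    obtain ⟨v, hv, hvi⟩ := mem_image.1 this
    rcases v with t | j
    · exact ⟨t, hv, hvi⟩
    · have : j = i := hvi
      exact absurd (this ▸ hv) hi
  push Not at hnot
  obtain ⟨i1, hi1⟩ := hnot
  obtain ⟨t, htR, -⟩ := hcol i1 hi1
  have hmm : ∀ i, ∃ m : T, Sum.inl m ∈ R ∧ ∀ t' : T, Sum.inl t' ∈ R → m.1 i ≤ t'.1 i := by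
    intro i
    obtain ⟨m, hm, hm'⟩ := exists_min_image (univ.filter (fun t : T => (Sum.inl t : T ⊕ I) ∈ R))
      (fun t => t.1 i) ⟨t, by simpa using htR⟩
    exact ⟨m, (mem_filter.1 hm).2, fun t' ht' => hm' t' (by simpa using ht')⟩
  choose m hmR hm using hmm
  let C : Finset I := univ.filter (fun i => (Sum.inr i : T ⊕ I) ∉ R)
  have hC : ∀ i, i ∈ C ↔ (Sum.inr i : T ⊕ I) ∉ R := by intro i; simp [C]
  have hm0 : ∀ i, 0 ≤ (m i).1 i := fun i => ((hT _).1 (m i).2).1 i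
  have hsum : (N : ℤ) < ∑ i ∈ C, ((m i).1 i + 1) := by
    by_contra! hle
    let y : I → ℤ := fun i => (if i ∈ C then (m i).1 i + 1 else 0) +
      (if i = i1 then N - ∑ i ∈ C, ((m i).1 i + 1) else 0)
    have hy1 : ∀ i, (if i ∈ C then (m i).1 i + 1 else 0) ≤ y i := by
      intro i
      simp only [y]
      split_ifs <;> omega
    have hyT : y ∈ T := by
      rw [hT]
      refine ⟨fun i => le_trans ?_ (hy1 i), ?_⟩
      · have := hm0 i
        split_ifs <;> omega
      · simp only [y, sum_add_distrib, sum_ite_mem, univ_inter, sum_ite_eq', mem_univ, if_true]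
        ring
    obtain ⟨i, hi⟩ := hD (Sum.inl ⟨y, hyT⟩)
    by_cases hiC : i ∈ C
    · have h1 := hkle _ _ _ (hi _ (hmR i))
      have h2 := hy1 i
      simp only [val, Sum.elim_inl, if_pos hiC] at h1 h2
      omega
    · have hiR : (Sum.inr i : T ⊕ I) ∈ R := by
        by_contra h
        exact hiC ((hC i).2 h)
      have h1 := hkle _ _ _ (hi _ hiR)
      have h2 := ((hT _).1 hyT).1 i
      simp only [val, Sum.elim_inl, Sum.elim_inr, if_true] at h1
      omega
  have hcardC : (C.card : ℤ) ≤ Fintype.card I := by exact_mod_cast card_le_univ C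
  have hsum' : (N : ℤ) < ∑ i ∈ C, (m i).1 i + C.card := by
    rw [sum_add_distrib] at hsum
    simpa using hsum
  have hin : ∀ t' : T, Sum.inl t' ∈ R → ∀ i ∈ C, t'.1 i ≤ (m i).1 i + Fintype.card I := by
    intro t' ht' i hi
    have h1 : t'.1 i - (m i).1 i ≤ ∑ j ∈ C, (t'.1 j - (m j).1 j) :=
      single_le_sum (f := fun j => t'.1 j - (m j).1 j)
        (fun j _ => sub_nonneg.2 (hm j t' ht')) hi
    have h2 : ∑ j ∈ C, t'.1 j ≤ N := by
      rw [← ((hT _).1 t'.2).2]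
      exact sum_le_sum_of_subset_of_nonneg (subset_univ _) (fun j _ _ => ((hT _).1 t'.2).1 j)
    rw [sum_sub_distrib] at h1
    linarith
  have hout : ∀ t' : T, Sum.inl t' ∈ R → ∀ i ∉ C, t'.1 i ≤ Fintype.card I := by
    intro t' ht' i hi
    have h1 : ∑ j ∈ C, (m j).1 j ≤ ∑ j ∈ C, t'.1 j := sum_le_sum (fun j _ => hm j t' ht')
    have h2 : ∑ j ∈ insert i C, t'.1 j ≤ N := by
      rw [← ((hT _).1 t'.2).2]
      exact sum_le_sum_of_subset_of_nonneg (subset_univ _) (fun j _ _ => ((hT _).1 t'.2).1 j)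
    rw [sum_insert hi] at h2
    linarith
  refine ⟨t.1, ((hT _).1 t.2).1, ((hT _).1 t.2).2, fun i => ?_⟩
  by_cases hi : i ∈ C
  · right
    obtain ⟨t', ht'R, ht'⟩ := hcol i ((hC i).1 hi)
    refine ⟨t'.1, ((hT _).1 t'.2).1, ((hT _).1 t'.2).2, ht', fun j => ?_⟩
    rw [abs_le]
    by_cases hj : j ∈ C
    · have := hin t htR j hj
      have := hin t' ht'R j hj
      have := hm j t htR
      have := hm j t' ht'R
      constructor <;> linarith
    · have := hout t htR j hj
      have := hout t' ht'R j hj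
      have := ((hT _).1 t.2).1 j
      have := ((hT _).1 t'.2).1 j
      constructor <;> linarith
  · left
    exact hout t htR i hi

theorem approx_brouwer {I : Type*} [Fintype I] [Nonempty I] (f : (I → ℝ) → (I → ℝ))
    (hf : ContinuousOn f (stdSimplex ℝ I)) (hmap : Set.MapsTo f (stdSimplex ℝ I) (stdSimplex ℝ I))
    (ε : ℝ) (hε : 0 < ε) : ∃ x ∈ stdSimplex ℝ I, ∀ i, x i ≤ f x i + ε := by
  have hu := (isCompact_stdSimplex ℝ I).uniformContinuousOn_of_continuous hf
  obtain ⟨δ, hδ, hu⟩ := Metric.uniformContinuousOn_iff.1 hu (ε / 2) (by positivity)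
  obtain ⟨N, hN⟩ := exists_nat_gt ((Fintype.card I : ℝ) / min δ (ε / 2))
  have hmin : 0 < min δ (ε / 2) := by positivity
  have hNpos : (0 : ℝ) < N := lt_of_le_of_lt (by positivity) hN
  have hsmall : (Fintype.card I : ℝ) / N < min δ (ε / 2) := by
    rw [div_lt_iff₀ hmin] at hN
    rw [div_lt_iff₀ hNpos]
    linarith
  have hs1 := hsmall.trans_le (min_le_left _ _)
  have hs2 := hsmall.trans_le (min_le_right _ _)
  let p : (I → ℤ) → I → ℝ := fun t i => (t i : ℝ) / N
  have hp : ∀ t : I → ℤ, (∀ i, 0 ≤ t i) → ∑ i, t i = N → p t ∈ stdSimplex ℝ I := by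
    intro t h1 h2
    refine ⟨fun i => div_nonneg (by exact_mod_cast h1 i) hNpos.le, ?_⟩
    simp only [p]
    rw [← Finset.sum_div, div_eq_one_iff_eq hNpos.ne']
    exact_mod_cast h2
  have hex : ∀ x ∈ stdSimplex ℝ I, ∃ i, x i ≤ f x i := by
    intro x hx
    by_contra! h
    have := Finset.sum_lt_sum_of_nonempty (s := Finset.univ) Finset.univ_nonempty
      (fun i _ => h i)
    rw [hx.2, (hmap hx).2] at this
    exact lt_irrefl _ this
  classical
  let c0 : (I → ℤ) → I := fun t => if h : ∃ i, p t i ≤ f (p t) i then h.choose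
    else Classical.arbitrary I
  obtain ⟨t, ht1, ht2, ht⟩ := grid (Classical.arbitrary I) N c0
  refine ⟨p t, hp t ht1 ht2, fun i => ?_⟩
  rcases ht i with h | ⟨t', h1, h2, h3, h4⟩
  · have h5 : p t i ≤ Fintype.card I / N := by
      simp only [p]
      gcongr
      exact_mod_cast h
    have := (hmap (hp t ht1 ht2)).1 i
    linarith
  · have hE := hex _ (hp t' h1 h2)
    have h5 : p t' i ≤ f (p t') i := by
      have : c0 t' = hE.choose := dif_pos hE
      rw [← h3, this]
      exact hE.choose_spec
    have h6 : ∀ j, |p t j - p t' j| ≤ Fintype.card I / N := by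
      intro j
      simp only [p]
      rw [← sub_div, abs_div, abs_of_pos hNpos]
      gcongr
      exact_mod_cast h4 j
    have h7 : dist (p t) (p t') < δ := by
      refine lt_of_le_of_lt ?_ hs1
      rw [dist_pi_le_iff (by positivity)]
      exact fun j => by rw [Real.dist_eq]; exact h6 j
    have h8 := hu _ (hp t ht1 ht2) _ (hp t' h1 h2) h7
    have h9 := (dist_le_pi_dist (f (p t)) (f (p t')) i).trans_lt h8
    rw [Real.dist_eq, abs_lt] at h9
    have h10 := (abs_le.1 (h6 i)).2
    linarith

/-- approximate fixed points -/
theorem approx_schauder {Y : Type*} [NormedAddCommGroup Y] [NormedSpace ℝ Y]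
    (C : Set Y) (hne : C.Nonempty) (hconv : Convex ℝ C) (Φ : Y → Y) (hmap : Set.MapsTo Φ C C)
    (hcont : ContinuousOn Φ C) (hcp : IsCompact (closure (Φ '' C))) (ε : ℝ) (hε : 0 < ε) :
    ∃ x ∈ C, dist x (Φ x) ≤ 2 * ε := by
  have htb : TotallyBounded (Φ '' C) := hcp.totallyBounded.subset subset_closure
  obtain ⟨F, hFs, hFfin, hF⟩ := Metric.finite_approx_of_totallyBounded htb ε hε
  have hFC : ∀ y ∈ F, y ∈ C := fun y hy => (Set.image_subset_iff.2 hmap) (hFs hy)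
  haveI : Fintype F := hFfin.fintype
  obtain ⟨z0, hz0⟩ := hne
  haveI : Nonempty F := by
    have := hF ⟨z0, hz0, rfl⟩
    simp only [Set.mem_iUnion] at this
    obtain ⟨y, hy, _⟩ := this
    exact ⟨⟨y, hy⟩⟩
  let g : (F → ℝ) → Y := fun w => ∑ i, w i • (i : Y)
  have hg : Continuous g := by fun_prop
  have hgC : ∀ w ∈ stdSimplex ℝ F, g w ∈ C := fun w hw =>
    hconv.sum_mem (fun i _ => hw.1 i) hw.2 (fun i _ => hFC i i.2)
  let a : F → Y → ℝ := fun i y => max 0 (ε - dist y i)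
  have ha : ∀ i, Continuous (a i) := fun i => by fun_prop
  have ha0 : ∀ i y, 0 ≤ a i y := fun i y => le_max_left _ _
  let A : Y → ℝ := fun y => ∑ i, a i y
  have hA : Continuous A := by fun_prop
  have hApos : ∀ y ∈ Φ '' C, 0 < A y := by
    intro y hy
    have := hF hy
    simp only [Set.mem_iUnion, Metric.mem_ball] at this
    obtain ⟨x, hx, hyx⟩ := this
    refine Finset.sum_pos' (fun i _ => ha0 i y) ⟨⟨x, hx⟩, mem_univ _, ?_⟩
    exact lt_max_of_lt_right (by simpa using hyx)
  let f : (F → ℝ) → (F → ℝ) := fun w i => a i (Φ (g w)) / A (Φ (g w))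
  have hΦg : ContinuousOn (fun w => Φ (g w)) (stdSimplex ℝ F) :=
    hcont.comp hg.continuousOn hgC
  have hf : ContinuousOn f (stdSimplex ℝ F) := by
    refine continuousOn_pi.2 fun i => ?_
    refine ((ha i).comp_continuousOn hΦg).div (hA.comp_continuousOn hΦg) ?_
    intro w hw
    exact (hApos _ ⟨g w, hgC w hw, rfl⟩).ne'
  have hfm : Set.MapsTo f (stdSimplex ℝ F) (stdSimplex ℝ F) := by
    intro w hw
    have hpos := hApos _ ⟨g w, hgC w hw, rfl⟩
    refine ⟨fun i => div_nonneg (ha0 _ _) hpos.le, ?_⟩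
    simp only [f]
    rw [← Finset.sum_div]
    exact div_self hpos.ne'
  let B : ℝ := 1 + ∑ i : F, ‖(i : Y)‖
  have hB : 0 < B := by positivity
  have hBi : ∀ i : F, ‖(i : Y)‖ ≤ B := by
    intro i
    have := Finset.single_le_sum (f := fun i : F => ‖(i : Y)‖) (fun j _ => norm_nonneg _)
      (mem_univ i)
    simp only [B]
    linarith
  have hn : (0 : ℝ) < Fintype.card F := by exact_mod_cast Fintype.card_pos
  obtain ⟨w, hw, hwf⟩ := approx_brouwer f hf hfm (ε / (2 * Fintype.card F * B)) (by positivity)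
  have hfw := hfm hw
  refine ⟨g w, hgC w hw, ?_⟩
  have h1 : dist (g w) (g (f w)) ≤ ε := by
    set η := ε / (2 * Fintype.card F * B) with hη
    have hηpos : 0 < η := by positivity
    rw [dist_eq_norm]
    simp only [g]
    rw [← Finset.sum_sub_distrib]
    calc ‖∑ i : F, (w i • (i : Y) - f w i • (i : Y))‖
        ≤ ∑ i : F, ‖w i • (i : Y) - f w i • (i : Y)‖ := norm_sum_le _ _
      _ ≤ ∑ i : F, (2 * η - (w i - f w i)) * B := by
          refine Finset.sum_le_sum fun i _ => ?_
          rw [← sub_smul, norm_smul]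
          have h := hwf i
          have h' : ‖w i - f w i‖ ≤ 2 * η - (w i - f w i) := by
            rw [Real.norm_eq_abs, abs_le]
            constructor <;> linarith
          exact mul_le_mul h' (hBi i) (norm_nonneg _) ((norm_nonneg _).trans h')
      _ = Fintype.card F * (2 * η) * B := by
          rw [← Finset.sum_mul, Finset.sum_sub_distrib, Finset.sum_sub_distrib, hw.2, hfw.2]
          simp
      _ = ε := by
          rw [hη]
          field_simp
      _ ≤ ε := le_rfl
  have h2 : dist (g (f w)) (Φ (g w)) ≤ ε := by
    rw [dist_eq_norm]
    have : g (f w) - Φ (g w) = ∑ i : F, f w i • ((i : Y) - Φ (g w)) := by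
      simp only [smul_sub, Finset.sum_sub_distrib]
      rw [← Finset.sum_smul, hfw.2, one_smul]
    rw [this]
    calc ‖∑ i : F, f w i • ((i : Y) - Φ (g w))‖
        ≤ ∑ i : F, ‖f w i • ((i : Y) - Φ (g w))‖ := norm_sum_le _ _
      _ ≤ ∑ i : F, f w i * ε := by
          refine Finset.sum_le_sum fun i _ => ?_
          rw [norm_smul, Real.norm_of_nonneg (hfw.1 i)]
          by_cases h : dist (Φ (g w)) i ≤ ε
          · rw [dist_comm, dist_eq_norm] at h
            exact mul_le_mul_of_nonneg_left h (hfw.1 i)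
          · have h0 : f w i = 0 := by
              have : a i (Φ (g w)) = 0 := max_eq_left (by linarith)
              simp only [f, this, zero_div]
            simp [h0]
      _ = ε := by rw [← Finset.sum_mul, hfw.2, one_mul]
  linarith [dist_triangle (g w) (g (f w)) (Φ (g w))]

theorem main {Y : Type*} [NormedAddCommGroup Y] [NormedSpace ℝ Y]
    (C : Set Y) (hne : C.Nonempty) (hcl : IsClosed C)
    (hconv : Convex ℝ C) (Φ : Y → Y) (hmap : Set.MapsTo Φ C C) (hcont : ContinuousOn Φ C)
    (hcp : IsCompact (closure (Φ '' C))) :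
    ∃ x ∈ C, Φ x = x := by
  have h : ∀ n : ℕ, ∃ x ∈ C, dist x (Φ x) ≤ 2 * (1 / ((n : ℝ) + 1)) := fun n =>
    approx_schauder C hne hconv Φ hmap hcont hcp _ (by positivity)
  choose u huC hu using h
  obtain ⟨y, hy, φ, hφ, hlim⟩ := hcp.tendsto_subseq (fun n => subset_closure ⟨u n, huC n, rfl⟩ : ∀ n, Φ (u n) ∈ closure (Φ '' C))
  have hyC : y ∈ C := (closure_minimal (Set.image_subset_iff.2 hmap) hcl) hy
  have h0 : Filter.Tendsto (fun n => dist (u (φ n)) (Φ (u (φ n)))) Filter.atTop (nhds 0) := by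
    have h1 : Filter.Tendsto (fun n : ℕ => 2 * (1 / ((n : ℝ) + 1))) Filter.atTop (nhds 0) := by
      simpa using (tendsto_one_div_add_atTop_nhds_zero_nat (𝕜 := ℝ)).const_mul 2
    exact squeeze_zero (fun _ => dist_nonneg) (fun n => hu (φ n)) (h1.comp hφ.tendsto_atTop)
  have hu' : Filter.Tendsto (fun n => u (φ n)) Filter.atTop (nhds y) := by
    have := (tendsto_iff_of_dist h0).2 hlim
    exact this
  have h2 : Filter.Tendsto (fun n => Φ (u (φ n))) Filter.atTop (nhds (Φ y)) :=
    (hcont y hyC).tendsto.comp (tendsto_nhdsWithin_iff.2 ⟨hu', Filter.Eventually.of_forall fun n => huC _⟩)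
  exact ⟨y, hyC, tendsto_nhds_unique h2 hlim⟩

end Scarf

/-- Schauder fixed point theorem: a continuous self-map of a nonempty closed bounded
convex subset of a Banach space whose image is relatively compact has a fixed point. -/
theorem stmt4 {Y : Type*} [NormedAddCommGroup Y] [NormedSpace ℝ Y] [CompleteSpace Y]
    (C : Set Y) (hne : C.Nonempty) (hcl : IsClosed C) (hbd : Bornology.IsBounded C)
    (hconv : Convex ℝ C) (Φ : Y → Y) (hmap : Set.MapsTo Φ C C) (hcont : ContinuousOn Φ C)
    (hcp : IsCompact (closure (Φ '' C))) :
    ∃ x ∈ C, Φ x = x := by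
  exact Scarf.main C hne hcl hconv Φ hmap hcont hcp
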